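/- Let S be an invertible bounded linear operator on H and λ > max(1, ‖S‖²). Define R = (λI − SS*)^{-1/2} S and T = (R*)⁻¹. Then I + (TT*)⁻¹ = λ(λI − SS*)⁻¹. -/

import Mathlib

/-- The scalar function `f_p(x) = x / (p x + 1 - p)`. -/
noncomputable def fScalar (p x : ℝ) : ℝ := x / (p * x + 1 - p)

/-- `f_p` applied to an operator via the continuous functional calculus. -/
noncomputable def fOp (p : ℝ) {H : Type*} [NormedAddCommGroup H] [InnerProductSpace ℂ H]
    [CompleteSpace H] (A : H →L[ℂ] H) : H →L[ℂ] H :=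
  cfc (fun x : ℝ => x / (p * x + 1 - p)) A

/-!
Put `q = √(l - a a⋆)`, so that `q q⋆ + a a⋆ = l`. Since `t t⋆` is inverse to `r r⋆`, where
`r = q⁻¹ a`, the left-hand side is `1 + r r⋆ = q⁻¹ (q q⋆ + a a⋆) (q⁻¹)⋆ = l (q⋆ q)⁻¹`, and
`q⋆ q = q² = l - a a⋆` because `q` is self-adjoint.
-/

open scoped Ring

section StarRing

variable {A : Type*} [Semiring A] [StarRing A]

theorem inverse_inverse_star_mul_star_self {r : A} (hr : IsUnit r) :
    ((star r)⁻¹ʳ * star (star r)⁻¹ʳ)⁻¹ʳ = r * star r := by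
  rw [← Ring.inverse_star, star_star, ← Ring.inverse_mul (.inl hr),
    Ring.inverse_inverse (hr.mul hr.star)]

theorem one_add_inverse_mul_mul_star_self {q : A} (hq : IsUnit q) (a : A) :
    1 + q⁻¹ʳ * a * star (q⁻¹ʳ * a) = q⁻¹ʳ * (q * star q + a * star a) * star q⁻¹ʳ := by
  have h_one : q⁻¹ʳ * (q * star q) * star q⁻¹ʳ = 1 := by
    rw [Ring.inverse_mul_cancel_left _ _ hq, ← star_mul, Ring.inverse_mul_cancel _ hq, star_one]
  rw [mul_add, add_mul, h_one, star_mul]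
  simp only [mul_assoc]

theorem one_add_inverse_mul_mul_star_self_eq_smul {𝕜 : Type*} [SMul 𝕜 A] [IsScalarTower 𝕜 A A]
    [SMulCommClass 𝕜 A A] {c : 𝕜} {q a : A} (hq : IsUnit q)
    (hc : q * star q + a * star a = c • (1 : A)) :
    1 + q⁻¹ʳ * a * star (q⁻¹ʳ * a) = c • (star q * q)⁻¹ʳ := by
  rw [one_add_inverse_mul_mul_star_self hq, hc, mul_smul_one, smul_mul_assoc,
    ← Ring.inverse_star, ← Ring.inverse_mul (.inr hq)]

end StarRing

section CStarAlgebra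

variable {A : Type*} [CStarAlgebra A] [PartialOrder A] [StarOrderedRing A] {a : A} {l : ℝ}

theorem isStrictlyPositive_smul_one_sub_mul_star_self (hl : ‖a‖ ^ 2 < l) :
    IsStrictlyPositive (l • (1 : A) - a * star a) := by
  have h_gap : IsStrictlyPositive (algebraMap ℝ A (l - ‖a‖ ^ 2)) :=
    isStrictlyPositive_algebraMap (sub_pos.2 hl)
  refine h_gap.of_le ?_
  rw [map_sub, ← Algebra.algebraMap_eq_smul_one]
  exact sub_le_sub_left CStarAlgebra.mul_star_le_algebraMap_norm_sq _

theorem stmt_16_general (ha : IsUnit a) (hl : ‖a‖ ^ 2 < l) {r t : A}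
    (hr : r = (CFC.sqrt (l • (1 : A) - a * star a))⁻¹ʳ * a) (ht : t = (star r)⁻¹ʳ) :
    1 + (t * star t)⁻¹ʳ = l • (l • (1 : A) - a * star a)⁻¹ʳ := by
  have h_pos := isStrictlyPositive_smul_one_sub_mul_star_self hl
  set b := l • (1 : A) - a * star a with hb
  set q := CFC.sqrt b
  have hq_unit : IsUnit q := h_pos.isUnit_cfcSqrt
  have hq_star : star q = q := (CFC.sqrt_nonneg b).isSelfAdjoint.star_eq
  have hq_mul : q * q = b := CFC.sqrt_mul_sqrt_self b h_pos.nonneg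
  have h_sum : q * star q + a * star a = l • (1 : A) := by
    rw [hq_star, hq_mul, hb, sub_add_cancel]
  have hr_unit : IsUnit r := hr ▸ hq_unit.ringInverse.mul ha
  calc 1 + (t * star t)⁻¹ʳ
      = 1 + r * star r := by rw [ht, inverse_inverse_star_mul_star_self hr_unit]
    _ = l • (star q * q)⁻¹ʳ := by
        rw [hr, one_add_inverse_mul_mul_star_self_eq_smul hq_unit h_sum]
    _ = l • b⁻¹ʳ := by rw [hq_star, hq_mul]

end CStarAlgebra

theorem stmt_16 {H : Type*} [NormedAddCommGroup H] [InnerProductSpace ℂ H] [CompleteSpace H]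
    (S : H →L[ℂ] H) (hS : IsUnit S) (l : ℝ) (hl1 : 1 < l)
    (hlS : ‖S‖ ^ 2 < l) :
    1 + Ring.inverse
        ((Ring.inverse (ContinuousLinearMap.adjoint
            (Ring.inverse (CFC.sqrt (l • (1 : H →L[ℂ] H) - S * ContinuousLinearMap.adjoint S)) * S))) *
         ContinuousLinearMap.adjoint (Ring.inverse (ContinuousLinearMap.adjoint
            (Ring.inverse (CFC.sqrt (l • (1 : H →L[ℂ] H) - S * ContinuousLinearMap.adjoint S)) * S)))) =
      l • Ring.inverse (l • (1 : H →L[ℂ] H) - S * ContinuousLinearMap.adjoint S) :=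
  stmt_16_general hS hlS rfl rfl
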